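/- Let (Xₜ) be a process satisfying P(max_{a≤t≤b}|X(t)−X(a)| > x) ≤ A₇ exp(−A₈ x^{2α/(α+2H)}/(b−a)^{2H(α−1)/(α+2H)}) for all 0 ≤ a < b and x > 0, with A₇, A₈ > 0, α ∈ (1,2], H ∈ (0,1). Then for every fixed t > 0, almost surely limsup_{h→0⁺} max_{|s|≤h}|X(t+s) − X(t)| / (h^{H(α−1)/α}(log log(1/h))^{(α+2H)/(2α)}) ≤ A₈^{−(α+2H)/(2α)}. -/

import Mathlib

open MeasureTheory Real Filter

open scoped Topology

/-!
At the scales `hₙ = ρ ^ n`, `0 < ρ < 1`, a threshold `y φ(hₙ)` with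
`φ h = h ^ (q / p) * (log log (1 / h)) ^ (1 / p)` turns the tail bound over an interval of length
`θ hₙ` into a multiple of `n ^ (-B y ^ p / θ ^ q)`, summable as soon as `B y ^ p > θ ^ q`;
Borel–Cantelli then controls the path on such intervals. Monotonicity of the maximal displacement
interpolates between consecutive scales at the cost of a factor `ρ ^ (-q / p)`, and `ρ → 1`.

The tail bound only measures displacements from the *left* endpoint of an interval. Applying it to
`[t - hₙ, t + hₙ]` would lose a factor in the constant, so to the left of `t` we use a grid of mesh
`hₙ / N`: the displacement from a grid point to `t` has length at most `hₙ` and obeys the sharp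
bound, while the displacement from a grid point within its own cell is negligible for large `N`.
-/

section Displacement

variable {E : Type*} [PseudoMetricSpace E] {Y : ℝ → E}

/-- The maximal displacement `max_{|s| ≤ h} d(Y (t + s), Y t)` of the path `Y` around time `t`.
As a real supremum it is `0` when the displacements are unbounded. -/
noncomputable def maxDisplacement (Y : ℝ → E) (t h : ℝ) : ℝ :=
  ⨆ s : Set.Icc (-h) h, dist (Y (t + s)) (Y t)

lemma maxDisplacement_nonneg (Y : ℝ → E) (t h : ℝ) : 0 ≤ maxDisplacement Y t h :=
  Real.iSup_nonneg fun _ => dist_nonneg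

lemma bddAbove_range_dist {s : Set ℝ} (hY : Bornology.IsBounded (Y '' s)) (z : E) :
    BddAbove (Set.range fun u : s => dist (Y u) z) := by
  obtain ⟨R, hR⟩ := (Metric.isBounded_iff_subset_closedBall z).1 hY
  exact ⟨R, Set.forall_mem_range.2 fun u => hR (Set.mem_image_of_mem Y u.2)⟩

lemma maxDisplacement_monotone (hY : ∀ a b, Bornology.IsBounded (Y '' Set.Icc a b)) (t : ℝ) :
    Monotone (maxDisplacement Y t) := by
  intro h h' hh'
  have hbdd : BddAbove (Set.range fun s : Set.Icc (-h') h' => dist (Y (t + s)) (Y t)) := by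
    refine (bddAbove_range_dist (hY (t - h') (t + h')) (Y t)).mono ?_
    rintro _ ⟨⟨s, hs⟩, rfl⟩
    exact ⟨⟨t + s, by linarith [hs.1], by linarith [hs.2]⟩, rfl⟩
  refine Real.iSup_le (fun s => ?_) (maxDisplacement_nonneg Y t h')
  exact le_ciSup hbdd ⟨s, by linarith [s.2.1], by linarith [s.2.2]⟩

lemma exists_le_mul_and_mul_le_add {d x : ℝ} {N : ℕ} (hd : 0 < d) (hx : 0 ≤ x) (hxN : x ≤ N * d) :
    ∃ j ≤ N, x ≤ j * d ∧ j * d ≤ x + d := by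
  refine ⟨⌈x / d⌉₊, Nat.ceil_le.2 ((div_le_iff₀ hd).2 hxN), (div_le_iff₀ hd).1 (Nat.le_ceil _), ?_⟩
  calc (⌈x / d⌉₊ : ℝ) * d ≤ (x / d + 1) * d := by
        gcongr
        exact (Nat.ceil_lt_add_one (by positivity)).le
    _ = x + d := by field_simp

lemma maxDisplacement_le_add_of_grid {t d M δ : ℝ} {N : ℕ} (hd : 0 < d) (hδ : 0 ≤ δ)
    (hcoarse : ∀ j ≤ N, ∀ u ∈ Set.Icc (t - j * d) (t - j * d + N * d),
      dist (Y u) (Y (t - j * d)) ≤ M)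
    (hfine : ∀ j ≤ N, ∀ u ∈ Set.Icc (t - j * d) (t - j * d + d), dist (Y u) (Y (t - j * d)) ≤ δ) :
    maxDisplacement Y t (N * d) ≤ M + δ := by
  have hNd : 0 ≤ N * d := by positivity
  have : Nonempty (Set.Icc (-(N * d)) (N * d)) := ⟨⟨0, by linarith, hNd⟩⟩
  refine ciSup_le fun ⟨s, hs₁, hs₂⟩ => ?_
  rcases le_total 0 s with hs | hs
  · have hright := hcoarse 0 N.zero_le (t + s)
    simp only [Nat.cast_zero, zero_mul, sub_zero] at hright
    linarith [hright ⟨by linarith, by linarith⟩]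
  · obtain ⟨j, hjN, hsj, hjs⟩ :=
      exists_le_mul_and_mul_le_add (N := N) hd (neg_nonneg.2 hs) (by linarith)
    have hjd : (j : ℝ) * d ≤ N * d := by gcongr
    calc dist (Y (t + s)) (Y t)
        ≤ dist (Y (t + s)) (Y (t - j * d)) + dist (Y t) (Y (t - j * d)) := dist_triangle_right ..
      _ ≤ δ + M := by
        gcongr
        · exact hfine j hjN _ ⟨by linarith, by linarith⟩
        · exact hcoarse j hjN _ ⟨by linarith, by linarith⟩
      _ = M + δ := add_comm _ _

end Displacement

section Scale

/-- The iterated-logarithm normalisation `h ^ κ * (log log (1 / h)) ^ r`. It is meaningful for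
`0 < h < exp (-1)`, where the iterated logarithm is positive. -/
noncomputable def iterLogScale (κ r h : ℝ) : ℝ :=
  h ^ κ * log (log (1 / h)) ^ r

lemma one_lt_log_one_div {h : ℝ} (hh : h ∈ Set.Ioo 0 (exp (-1))) : 1 < log (1 / h) := by
  rw [one_div, log_inv, lt_neg]
  exact (log_lt_iff_lt_exp hh.1).2 hh.2

lemma log_log_one_div_pos {h : ℝ} (hh : h ∈ Set.Ioo 0 (exp (-1))) : 0 < log (log (1 / h)) :=
  log_pos (one_lt_log_one_div hh)

lemma iterLogScale_pos (κ r : ℝ) {h : ℝ} (hh : h ∈ Set.Ioo 0 (exp (-1))) :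
    0 < iterLogScale κ r h :=
  mul_pos (rpow_pos_of_pos hh.1 κ) (rpow_pos_of_pos (log_log_one_div_pos hh) r)

lemma rpow_mul_iterLogScale_le {κ r ρ h h' : ℝ} (hκ : 0 ≤ κ) (hr : 0 ≤ r) (hρ : 0 ≤ ρ)
    (hh : 0 < h) (hh' : h' ∈ Set.Ioo 0 (exp (-1))) (hle : h ≤ h') (hρh : ρ * h' ≤ h) :
    ρ ^ κ * iterLogScale κ r h' ≤ iterLogScale κ r h := by
  have hlog := one_lt_log_one_div hh'
  have hloglog := log_log_one_div_pos hh'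
  have hh'₀ : 0 < h' := hh'.1
  unfold iterLogScale
  rw [← mul_assoc, ← mul_rpow hρ hh'₀.le]
  gcongr

lemma exp_neg_mul_iterLogScale_rpow_div {p θ y h : ℝ} (B q : ℝ) (hp : p ≠ 0) (hθ : 0 < θ)
    (hy : 0 ≤ y) (hh : h ∈ Set.Ioo 0 (exp (-1))) :
    exp (-(B * (y * iterLogScale (q / p) p⁻¹ h) ^ p / (θ * h) ^ q))
      = log (1 / h) ^ (-(B * y ^ p / θ ^ q)) := by
  have hh₀ : 0 < h := hh.1
  have hloglog := log_log_one_div_pos hh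
  have hscale : iterLogScale (q / p) p⁻¹ h ^ p = h ^ q * log (log (1 / h)) := by
    rw [iterLogScale, mul_rpow (by positivity) (by positivity), ← rpow_mul hh₀.le,
      rpow_inv_rpow hloglog.le hp, div_mul_cancel₀ q hp]
  rw [rpow_def_of_pos (one_pos.trans (one_lt_log_one_div hh)),
    mul_rpow hy (iterLogScale_pos _ _ hh).le, hscale, mul_rpow hθ.le hh₀.le]
  congr 1
  field_simp

variable {ρ : ℝ}

lemma summable_log_one_div_pow_rpow_neg (hρ₀ : 0 < ρ) (hρ₁ : ρ < 1) {β : ℝ} (hβ : 1 < β) :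
    Summable fun n : ℕ => log (1 / ρ ^ n) ^ (-β) := by
  have hlog : 0 ≤ log (1 / ρ) := log_nonneg ((one_le_div hρ₀).2 hρ₁.le)
  have hpow (n : ℕ) : log (1 / ρ ^ n) ^ (-β) = (n : ℝ) ^ (-β) * log (1 / ρ) ^ (-β) := by
    rw [← one_div_pow, log_pow, mul_rpow n.cast_nonneg hlog]
  simp_rw [hpow]
  exact (summable_nat_rpow.2 (neg_lt_neg hβ)).mul_right _

lemma eventually_pow_mem_Ioo (hρ₀ : 0 < ρ) (hρ₁ : ρ < 1) {x : ℝ} (hx : 0 < x) :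
    ∀ᶠ n : ℕ in atTop, ρ ^ n ∈ Set.Ioo 0 x := by
  filter_upwards [(tendsto_pow_atTop_nhds_zero_of_lt_one hρ₀.le hρ₁).eventually_lt_const hx]
    with n hn using ⟨by positivity, hn⟩

lemma eventually_nhdsGT_zero_exists_pow_near (hρ₀ : 0 < ρ) (hρ₁ : ρ < 1) {P : ℕ → Prop}
    (hP : ∀ᶠ n in atTop, P n) :
    ∀ᶠ h in 𝓝[>] 0, ∃ n, P n ∧ ρ ^ (n + 1) < h ∧ h ≤ ρ ^ n := by
  obtain ⟨m, hm⟩ := eventually_atTop.1 hP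
  filter_upwards [Ioo_mem_nhdsGT (show 0 < ρ ^ m by positivity)] with h ⟨hh, hhm⟩
  have hh₁ : h ≤ 1 := hhm.le.trans (pow_le_one₀ hρ₀.le hρ₁.le)
  obtain ⟨n, hlt, hle⟩ := exists_nat_pow_near_of_lt_one hh hh₁ hρ₀ hρ₁
  have hmn : m < n + 1 := (pow_lt_pow_iff_right_of_lt_one₀ hρ₀ hρ₁).1 (hlt.trans hhm)
  exact ⟨n, hm n (Nat.lt_succ_iff.1 hmn), hlt, hle⟩

lemma eventually_div_iterLogScale_le_of_pow {F : ℝ → ℝ} (hF : Monotone F) {κ r C : ℝ}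
    (hκ : 0 ≤ κ) (hr : 0 ≤ r) (hC : 0 ≤ C) (hρ₀ : 0 < ρ) (hρ₁ : ρ < 1)
    (hpow : ∀ᶠ n : ℕ in atTop, F (ρ ^ n) ≤ C * ρ ^ κ * iterLogScale κ r (ρ ^ n)) :
    ∀ᶠ h in 𝓝[>] 0, F h / iterLogScale κ r h ≤ C := by
  filter_upwards [eventually_nhdsGT_zero_exists_pow_near hρ₀ hρ₁
      (hpow.and (eventually_pow_mem_Ioo hρ₀ hρ₁ (exp_pos (-1)))), self_mem_nhdsWithin]
    with h ⟨n, ⟨hFn, hn⟩, hlt, hle⟩ hh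
  rw [div_le_iff₀ (iterLogScale_pos κ r ⟨hh, hle.trans_lt hn.2⟩)]
  calc F h ≤ F (ρ ^ n) := hF hle
    _ ≤ C * (ρ ^ κ * iterLogScale κ r (ρ ^ n)) := by rwa [← mul_assoc]
    _ ≤ C * iterLogScale κ r h := by
      gcongr
      exact rpow_mul_iterLogScale_le hκ hr hρ₀.le hh hn hle (by rw [← pow_succ']; exact hlt.le)

end Scale

section AlmostSure

variable {Ω : Type*} [MeasurableSpace Ω] {μ : Measure Ω}

lemma ae_eventually_notMem_of_eventually_le_ofReal {s : ℕ → Set Ω} {f : ℕ → ℝ} (hf : Summable f)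
    (hs : ∀ᶠ n in atTop, μ (s n) ≤ ENNReal.ofReal (f n)) :
    ∀ᵐ ω ∂μ, ∀ᶠ n in atTop, ω ∉ s n := by
  obtain ⟨m, hm⟩ := eventually_atTop.1 hs
  have hfin : ∑' n, μ (s (n + m)) ≠ ⊤ :=
    ne_top_of_le_ne_top ((summable_nat_add_iff m).2 hf).tsum_ofReal_ne_top
      (ENNReal.tsum_le_tsum fun n => hm (n + m) (Nat.le_add_left m n))
  filter_upwards [ae_eventually_notMem hfin] with ω hω
  rwa [← map_add_atTop_eq_nat m, eventually_map]

lemma ae_limsup_le_of_forall_gt {ι : Type*} {l : Filter ι} [l.NeBot] {f : Ω → ι → ℝ} {K : ℝ}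
    (hnonneg : ∀ ω, ∀ᶠ i in l, 0 ≤ f ω i) (hle : ∀ C > K, ∀ᵐ ω ∂μ, ∀ᶠ i in l, f ω i ≤ C) :
    ∀ᵐ ω ∂μ, limsup (f ω) l ≤ K := by
  obtain ⟨C, -, hKC, hC⟩ := exists_seq_strictAnti_tendsto K
  filter_upwards [ae_all_iff.2 fun n => hle (C n) (hKC n)] with ω hω
  exact ge_of_tendsto' hC fun n =>
    limsup_le_of_le (isCoboundedUnder_le_of_eventually_le l (hnonneg ω)) (hω n)

end AlmostSure

section TailBound

variable {Ω E : Type*} [MeasurableSpace Ω] [PseudoMetricSpace E] {μ : Measure Ω}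
  {X : ℝ → Ω → E} {A B p q : ℝ}

/-- The stretched-exponential bound `A exp (-B x ^ p / (b - a) ^ q)` on the probability that `X`
moves by more than `x` from its position at time `a` during `[a, b]`. -/
def HasMaximalTailBound (X : ℝ → Ω → E) (μ : Measure Ω) (A B p q : ℝ) : Prop :=
  ∀ a b x : ℝ, 0 ≤ a → a < b → 0 < x →
    μ {ω | x < ⨆ u : Set.Icc a b, dist (X u ω) (X a ω)}
      ≤ ENNReal.ofReal (A * exp (-(B * x ^ p / (b - a) ^ q)))

lemma HasMaximalTailBound.ae_eventually_dist_le (htail : HasMaximalTailBound X μ A B p q)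
    (hX : ∀ᵐ ω ∂μ, ∀ a b, Bornology.IsBounded ((X · ω) '' Set.Icc a b)) (hp : p ≠ 0)
    {ρ θ y : ℝ} (hρ₀ : 0 < ρ) (hρ₁ : ρ < 1) (hθ : 0 < θ) (hy : 0 < y)
    (hβ : 1 < B * y ^ p / θ ^ q) {a : ℕ → ℝ} (ha : ∀ᶠ n in atTop, 0 ≤ a n) :
    ∀ᵐ ω ∂μ, ∀ᶠ n in atTop, ∀ u ∈ Set.Icc (a n) (a n + θ * ρ ^ n),
      dist (X u ω) (X (a n) ω) ≤ y * iterLogScale (q / p) p⁻¹ (ρ ^ n) := by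
  have hbound : ∀ᶠ n in atTop,
      μ {ω | y * iterLogScale (q / p) p⁻¹ (ρ ^ n)
          < ⨆ u : Set.Icc (a n) (a n + θ * ρ ^ n), dist (X u ω) (X (a n) ω)}
        ≤ ENNReal.ofReal (A * log (1 / ρ ^ n) ^ (-(B * y ^ p / θ ^ q))) := by
    filter_upwards [ha, eventually_pow_mem_Ioo hρ₀ hρ₁ (exp_pos (-1))] with n han hn
    have hlt : a n < a n + θ * ρ ^ n := lt_add_of_pos_right _ (by positivity)
    have htailₙ := htail _ _ _ han hlt (mul_pos hy (iterLogScale_pos (q / p) p⁻¹ hn))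
    rwa [add_sub_cancel_left, exp_neg_mul_iterLogScale_rpow_div B q hp hθ hy.le hn] at htailₙ
  have hsum := (summable_log_one_div_pow_rpow_neg hρ₀ hρ₁ hβ).mul_left A
  filter_upwards [hX, ae_eventually_notMem_of_eventually_le_ofReal hsum hbound] with ω hXω hω
  filter_upwards [hω] with n hn u hu
  exact (le_ciSup (bddAbove_range_dist (hXω _ _) _) ⟨u, hu⟩).trans (not_lt.1 hn)

lemma one_lt_mul_rpow_of_rpow_neg_inv_lt {y : ℝ} (hB : 0 < B) (hp : 0 < p)
    (hy : B ^ (-p⁻¹) < y) : 1 < B * y ^ p := by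
  have hBy : (B ^ (-p⁻¹)) ^ p < y ^ p := rpow_lt_rpow (by positivity) hy hp
  rw [← rpow_mul hB.le, neg_mul, inv_mul_cancel₀ hp.ne', rpow_neg_one] at hBy
  exact (inv_lt_iff_one_lt_mul₀' hB).1 hBy

lemma exists_nat_one_lt_div_inv_rpow {c : ℝ} (hc : 0 < c) (hq : 0 < q) :
    ∃ N : ℕ, 0 < N ∧ 1 < c / (N : ℝ)⁻¹ ^ q := by
  have htop : Tendsto (fun N : ℕ => c * (N : ℝ) ^ q) atTop atTop :=
    ((tendsto_rpow_atTop hq).comp tendsto_natCast_atTop_atTop).const_mul_atTop hc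
  obtain ⟨N, hN, hN₀⟩ := ((htop.eventually_gt_atTop 1).and (eventually_gt_atTop 0)).exists
  exact ⟨N, hN₀, by rwa [inv_rpow N.cast_nonneg, div_inv_eq_mul]⟩

lemma HasMaximalTailBound.ae_eventually_maxDisplacement_pow_le
    (htail : HasMaximalTailBound X μ A B p q)
    (hX : ∀ᵐ ω ∂μ, ∀ a b, Bornology.IsBounded ((X · ω) '' Set.Icc a b))
    (hp : 0 < p) (hq : 0 < q) (hB : 0 < B) {t ρ y : ℝ} (ht : 0 < t) (hρ₀ : 0 < ρ) (hρ₁ : ρ < 1)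
    (hy : B ^ (-p⁻¹) < y) :
    ∀ᵐ ω ∂μ, ∀ᶠ n in atTop,
      maxDisplacement (X · ω) t (ρ ^ n) ≤ y * iterLogScale (q / p) p⁻¹ (ρ ^ n) := by
  obtain ⟨z, hBz, hzy⟩ := exists_between hy
  have hz : 0 < z := (rpow_pos_of_pos hB _).trans hBz
  have hε : 0 < y - z := sub_pos.2 hzy
  obtain ⟨N, hN₀, hN⟩ := exists_nat_one_lt_div_inv_rpow (c := B * (y - z) ^ p) (by positivity) hq
  have hgrid (j : ℕ) : ∀ᶠ n : ℕ in atTop, 0 ≤ t - j * ((N : ℝ)⁻¹ * ρ ^ n) := by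
    have hlim : Tendsto (fun n : ℕ => t - j * ((N : ℝ)⁻¹ * ρ ^ n)) atTop (𝓝 t) := by
      simpa using (((tendsto_pow_atTop_nhds_zero_of_lt_one hρ₀.le hρ₁).const_mul
        (N : ℝ)⁻¹).const_mul (j : ℝ)).const_sub t
    exact (hlim.eventually_const_lt ht).mono fun _ => le_of_lt
  have hcoarse (j : ℕ) := htail.ae_eventually_dist_le hX hp.ne' hρ₀ hρ₁ one_pos hz
    (by simpa using one_lt_mul_rpow_of_rpow_neg_inv_lt hB hp hBz) (hgrid j)
  have hfine (j : ℕ) := htail.ae_eventually_dist_le hX hp.ne' hρ₀ hρ₁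
    (inv_pos.2 (Nat.cast_pos.2 hN₀)) hε hN (hgrid j)
  filter_upwards [ae_all_iff.2 hcoarse, ae_all_iff.2 hfine] with ω hcoarseω hfineω
  filter_upwards [(eventually_all_finite (Set.finite_Iic N)).2 fun j _ => hcoarseω j,
    (eventually_all_finite (Set.finite_Iic N)).2 fun j _ => hfineω j,
    eventually_pow_mem_Ioo hρ₀ hρ₁ (exp_pos (-1))] with n hcoarseₙ hfineₙ hn
  have hscale := iterLogScale_pos (q / p) p⁻¹ hn
  have hNd : (N : ℝ) * ((N : ℝ)⁻¹ * ρ ^ n) = ρ ^ n :=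
    mul_inv_cancel_left₀ (Nat.cast_ne_zero.2 hN₀.ne') _
  have hgridₙ := maxDisplacement_le_add_of_grid (Y := (X · ω)) (N := N)
    (d := (N : ℝ)⁻¹ * ρ ^ n) (by positivity) (mul_pos hε hscale).le
    (by simpa only [hNd, one_mul, Set.mem_Iic] using hcoarseₙ) hfineₙ
  rwa [hNd, ← add_mul, add_sub_cancel] at hgridₙ

lemma exists_mem_Ioo_lt_mul_rpow (κ : ℝ) {K C : ℝ} (hKC : K < C) :
    ∃ ρ ∈ Set.Ioo (0 : ℝ) 1, K < C * ρ ^ κ := by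
  have hlim : Tendsto (fun ρ : ℝ => C * ρ ^ κ) (𝓝[<] 1) (𝓝 C) := by
    have hcont : ContinuousAt (fun ρ : ℝ => C * ρ ^ κ) 1 :=
      continuousAt_const.mul (continuousAt_rpow_const 1 κ (Or.inl one_ne_zero))
    simpa using hcont.tendsto.mono_left nhdsWithin_le_nhds
  obtain ⟨ρ, hKρ, hρ⟩ :=
    ((hlim.eventually_const_lt hKC).and (Ioo_mem_nhdsLT one_pos)).exists
  exact ⟨ρ, hρ, hKρ⟩

lemma HasMaximalTailBound.ae_eventually_maxDisplacement_div_le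
    (htail : HasMaximalTailBound X μ A B p q)
    (hX : ∀ᵐ ω ∂μ, ∀ a b, Bornology.IsBounded ((X · ω) '' Set.Icc a b))
    (hp : 0 < p) (hq : 0 < q) (hB : 0 < B) {t C : ℝ} (ht : 0 < t) (hC : B ^ (-p⁻¹) < C) :
    ∀ᵐ ω ∂μ, ∀ᶠ h in 𝓝[>] 0,
      maxDisplacement (X · ω) t h / iterLogScale (q / p) p⁻¹ h ≤ C := by
  have hC₀ : 0 ≤ C := ((rpow_pos_of_pos hB _).trans hC).le
  have hκ : 0 ≤ q / p := by positivity
  obtain ⟨ρ, ⟨hρ₀, hρ₁⟩, hρC⟩ := exists_mem_Ioo_lt_mul_rpow (q / p) hC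
  filter_upwards [hX, htail.ae_eventually_maxDisplacement_pow_le hX hp hq hB ht hρ₀ hρ₁ hρC]
    with ω hXω hpow
  exact eventually_div_iterLogScale_le_of_pow (maxDisplacement_monotone hXω t) hκ
    (inv_nonneg.2 hp.le) hC₀ hρ₀ hρ₁ hpow

theorem stmt_14_general (htail : HasMaximalTailBound X μ A B p q)
    (hX : ∀ᵐ ω ∂μ, ∀ a b, Bornology.IsBounded ((X · ω) '' Set.Icc a b))
    (hp : 0 < p) (hq : 0 < q) (hB : 0 < B) {t : ℝ} (ht : 0 < t) :
    ∀ᵐ ω ∂μ, limsup (fun h => maxDisplacement (X · ω) t h / iterLogScale (q / p) p⁻¹ h) (𝓝[>] 0)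
      ≤ B ^ (-p⁻¹) := by
  refine ae_limsup_le_of_forall_gt (fun ω => ?_)
    fun C hC => htail.ae_eventually_maxDisplacement_div_le hX hp hq hB ht hC
  filter_upwards [Ioo_mem_nhdsGT (exp_pos (-1))] with h hh
  exact div_nonneg (maxDisplacement_nonneg _ t h) (iterLogScale_pos _ _ hh).le

end TailBound

theorem stmt_14 {Ω : Type*} [MeasurableSpace Ω] (μ : Measure Ω) [IsProbabilityMeasure μ]
    (α H A₇ A₈ : ℝ) (hα : α ∈ Set.Ioc (1:ℝ) 2) (hH : H ∈ Set.Ioo (0:ℝ) 1)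
    (hA₇ : 0 < A₇) (hA₈ : 0 < A₈)
    (X : ℝ → Ω → ℝ)
    (hcont : ∀ ω, Continuous (fun t => X t ω))
    (htail : ∀ a b x : ℝ, 0 ≤ a → a < b → 0 < x →
      μ {ω | x < ⨆ t : Set.Icc a b, |X t ω - X a ω|}
        ≤ ENNReal.ofReal (A₇ * Real.exp (-(A₈ * x ^ (2 * α / (α + 2 * H))
            / (b - a) ^ (2 * H * (α - 1) / (α + 2 * H))))))
    (t : ℝ) (ht : 0 < t) :
    ∀ᵐ ω ∂μ,
      Filter.limsup
        (fun h : ℝ => (⨆ s : Set.Icc (-h) h, |X (t + s) ω - X t ω|)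
          / (h ^ (H * (α - 1) / α) * (Real.log (Real.log (1 / h))) ^ ((α + 2 * H) / (2 * α))))
        (nhdsWithin 0 (Set.Ioi 0))
      ≤ A₈ ^ (-((α + 2 * H) / (2 * α))) := by
  have hα₀ : 0 < α := one_pos.trans hα.1
  have hα₁ : 0 < α - 1 := sub_pos.2 hα.1
  have hH₀ : 0 < H := hH.1
  have hκ : 2 * H * (α - 1) / (α + 2 * H) / (2 * α / (α + 2 * H)) = H * (α - 1) / α := by
    field_simp
  have hbdd : ∀ᵐ ω ∂μ, ∀ a b, Bornology.IsBounded ((X · ω) '' Set.Icc a b) :=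
    ae_of_all μ fun ω a b => (isCompact_Icc.image (hcont ω)).isBounded
  have hlimsup := stmt_14_general (X := X) htail hbdd (by positivity) (by positivity) hA₈ ht
  rwa [hκ, inv_div] at hlimsup
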